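/- Fix integers p ≥ 1 and N ≥ 1, a partition x_0 < x_1 < ⋯ < x_N, and data y_{n,2k} ∈ ℝ (0 ≤ n ≤ N, 0 ≤ k ≤ p). Let α ∈ Θ_{2p}, let ℓ_α be a continuous function on [x_0,x_N] satisfying ℓ_α(L_n(x)) = α_n ℓ_α(x) + q_n(α_n, x) for all x ∈ [x_0,x_N] and 1 ≤ n ≤ N, and let φ be the classical Lidstone interpolation function for the data. Then ‖ℓ_α − φ‖_∞ ≤ (|α|_∞ / (1 − |α|_∞)) · (‖φ‖_∞ + M_{0,2p}), where |α|_∞ = max_n |α_n|, ‖·‖_∞ denotes the supremum norm over [x_0,x_N], and M_{0,2p} = (2ρπ/3) Σ_{l=0}^{p} ((x_N − x_0)/π)^{2l}. -/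

import Mathlib

/-- The defining property of the sequence of Lidstone polynomial functions. -/
def LidstoneProp (Λ : ℕ → ℝ → ℝ) : Prop :=
  (∀ l : ℕ, ∃ P : Polynomial ℝ, ∀ x : ℝ, Λ l x = P.eval x) ∧
  (∀ x : ℝ, Λ 0 x = x) ∧
  (∀ l : ℕ, (∀ x : ℝ, iteratedDeriv 2 (Λ (l + 1)) x = Λ l x) ∧
    Λ (l + 1) 0 = 0 ∧ Λ (l + 1) 1 = 0)

/-!
On the whole interval `[x 0, x N]` let `B` be the Lidstone interpolant of the endpoint data. A
polynomial of degree at most `2p + 1` is the Lidstone interpolant of its own even derivatives, and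
Lidstone interpolation is linear and compatible with affine changes of variable; hence
`q n s = φ (L n s) - α n * B s`, and the functional equation of `ℓ` becomes
`(ℓ - φ) (L n s) = α n * ((ℓ - φ) s + (φ - B) s)`. Taking suprema gives
`‖ℓ - φ‖ ≤ |α| (‖ℓ - φ‖ + ‖φ‖ + ‖B‖)`.

The bound on `‖B‖` comes from `|Λ_l| ≤ (π / 3) / π ^ (2l)` on `[0, 1]`. For `l ≥ 1` the stronger
bound with an extra factor `sin (π s)` propagates from `l` to `l + 1` by concavity, because
`sin (π s) / π ^ 2` solves `-f'' = sin (π s)` with the same boundary values as `Λ_{l+1}`.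
-/

open Polynomial Set

lemma eq_of_derivative_derivative_eq {K : Type*} [Field K] [CharZero K] {R S : K[X]} {a b : K}
    (hab : a ≠ b) (hderiv : derivative (derivative R) = derivative (derivative S))
    (ha : R.eval a = S.eval a) (hb : R.eval b = S.eval b) : R = S := by
  classical
  have hdegree : (R - S).natDegree ≤ 1 := by
    have hconst : (derivative (R - S)).natDegree = 0 := by
      rw [← derivative_eq_zero, derivative_sub, derivative_sub, hderiv, sub_self]
    rw [natDegree_derivative] at hconst
    lia
  refine eq_of_degree_sub_lt_of_eval_finset_eq {a, b} ?_ (by simp [ha, hb])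
  rw [Finset.card_pair hab]
  exact degree_le_natDegree.trans_lt (by exact_mod_cast Nat.lt_succ_of_le hdegree)

lemma derivative_derivative_comp_of_derivative_eq_C {R : Type*} [CommRing R] {A : R[X]} {m : R}
    (hA : derivative A = C m) (Q : R[X]) :
    derivative (derivative (Q.comp A)) = C (m ^ 2) * (derivative (derivative Q)).comp A := by
  simp only [derivative_comp, derivative_mul, hA, derivative_C, C_pow]
  ring

lemma nonneg_of_hasDerivAt2_nonpos {a b : ℝ} {f f' f'' : ℝ → ℝ} (hf : ContinuousOn f (Icc a b))
    (hf' : ∀ s ∈ Ioo a b, HasDerivAt f (f' s) s) (hf'' : ∀ s ∈ Ioo a b, HasDerivAt f' (f'' s) s)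
    (hnonpos : ∀ s ∈ Ioo a b, f'' s ≤ 0) (ha : 0 ≤ f a) (hb : 0 ≤ f b) {s : ℝ}
    (hs : s ∈ Icc a b) : 0 ≤ f s := by
  have hab : a ≤ b := hs.1.trans hs.2
  have hconcave : ConcaveOn ℝ (Icc a b) f := by
    apply concaveOn_of_hasDerivWithinAt2_nonpos (convex_Icc a b) hf (f' := f') (f'' := f'') <;>
      rw [interior_Icc]
    · exact fun s hs => (hf' s hs).hasDerivWithinAt
    · exact fun s hs => (hf'' s hs).hasDerivWithinAt
    · exact hnonpos
  exact (le_min ha hb).trans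
    (hconcave.min_le_of_mem_Icc (left_mem_Icc.2 hab) (right_mem_Icc.2 hab) hs)

lemma eval_le_sin_of_neg_derivative_derivative_le {Q : ℝ[X]} (h0 : Q.eval 0 = 0)
    (h1 : Q.eval 1 = 0) {c : ℝ}
    (hQ : ∀ s ∈ Icc (0 : ℝ) 1, -(derivative (derivative Q)).eval s ≤ c * Real.sin (Real.pi * s))
    {s : ℝ} (hs : s ∈ Icc (0 : ℝ) 1) :
    Q.eval s ≤ c / Real.pi ^ 2 * Real.sin (Real.pi * s) := by
  have hlin (r : ℝ) : HasDerivAt (fun r => Real.pi * r) Real.pi r := by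
    simpa using (hasDerivAt_id r).const_mul Real.pi
  rw [← sub_nonneg]
  refine nonneg_of_hasDerivAt2_nonpos
    (f := fun r => c / Real.pi ^ 2 * Real.sin (Real.pi * r) - Q.eval r)
    (f' := fun r => c / Real.pi ^ 2 * (Real.cos (Real.pi * r) * Real.pi) - (derivative Q).eval r)
    (f'' := fun r => c / Real.pi ^ 2 * (-Real.sin (Real.pi * r) * Real.pi * Real.pi)
      - (derivative (derivative Q)).eval r) (by fun_prop) ?_ ?_ ?_ (by simp [h0]) (by simp [h1]) hs
  · exact fun r _ => ((hlin r).sin.const_mul _).sub (Q.hasDerivAt r)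
  · exact fun r _ => (((hlin r).cos.mul_const _).const_mul _).sub ((derivative Q).hasDerivAt r)
  · intro r hr
    have hcancel : c / Real.pi ^ 2 * (-Real.sin (Real.pi * r) * Real.pi * Real.pi)
        = -(c * Real.sin (Real.pi * r)) := by field_simp
    linarith [hQ r (Ioo_subset_Icc_self hr)]

lemma abs_eval_le_sin_of_abs_derivative_derivative_le {Q : ℝ[X]} (h0 : Q.eval 0 = 0)
    (h1 : Q.eval 1 = 0) {c : ℝ}
    (hQ : ∀ s ∈ Icc (0 : ℝ) 1, |(derivative (derivative Q)).eval s| ≤ c * Real.sin (Real.pi * s))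
    {s : ℝ} (hs : s ∈ Icc (0 : ℝ) 1) :
    |Q.eval s| ≤ c / Real.pi ^ 2 * Real.sin (Real.pi * s) := by
  refine abs_le'.2 ⟨?_, ?_⟩
  · exact eval_le_sin_of_neg_derivative_derivative_le h0 h1
      (fun r hr => (neg_le_abs _).trans (hQ r hr)) hs
  · rw [← eval_neg]
    refine eval_le_sin_of_neg_derivative_derivative_le (by simp [h0]) (by simp [h1])
      (fun r hr => ?_) hs
    simpa using (le_abs_self _).trans (hQ r hr)

lemma pi_mul_mul_one_sub_le_sin {s : ℝ} (hs : s ∈ Icc (0 : ℝ) 1) :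
    Real.pi * (s * (1 - s)) ≤ Real.sin (Real.pi * s) := by
  wlog hhalf : s ≤ 1 / 2 generalizing s
  · have hreflect := this (s := 1 - s) ⟨by linarith [hs.2], by linarith [hs.1]⟩ (by linarith)
    rw [show Real.pi * (1 - s) = Real.pi - Real.pi * s by ring, Real.sin_pi_sub] at hreflect
    linarith
  have hpi_sq : Real.pi ^ 2 ≤ 12 := by nlinarith [Real.pi_pos, Real.pi_lt_d2]
  have hcubic : Real.pi ^ 2 * s / 6 ≤ 1 := by nlinarith [hs.1]
  calc Real.pi * (s * (1 - s))
      ≤ Real.pi * (s * (1 - Real.pi ^ 2 * s / 6 * s)) := by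
        have := hs.1
        gcongr
        exact mul_le_of_le_one_left hs.1 hcubic
    _ = Real.pi * s - (Real.pi * s) ^ 3 / 6 := by ring
    _ ≤ Real.sin (Real.pi * s) := Real.sin_ge_sub_cube (mul_nonneg Real.pi_pos.le hs.1)

/-- The sequence of Lidstone polynomials over a commutative ring: the algebraic counterpart of
`LidstoneProp`, with the formal derivative in place of `iteratedDeriv`. -/
structure IsLidstoneSequence {R : Type*} [CommRing R] (P : ℕ → R[X]) : Prop where
  zero : P 0 = X
  derivative_derivative : ∀ l, derivative (derivative (P (l + 1))) = P l
  eval_zero : ∀ l, (P (l + 1)).eval 0 = 0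
  eval_one : ∀ l, (P (l + 1)).eval 1 = 0

lemma iteratedDeriv_polynomial_eval {𝕜 : Type*} [NontriviallyNormedField 𝕜] (R : 𝕜[X]) (k : ℕ) :
    iteratedDeriv k (fun t => R.eval t) = fun t => (derivative^[k] R).eval t := by
  induction k with
  | zero => simp
  | succ k ih =>
    ext t
    rw [iteratedDeriv_succ, ih, Polynomial.deriv, Function.iterate_succ_apply']

lemma LidstoneProp.exists_isLidstoneSequence {Λ : ℕ → ℝ → ℝ} (hΛ : LidstoneProp Λ) :
    ∃ P : ℕ → ℝ[X], IsLidstoneSequence P ∧ ∀ l t, Λ l t = (P l).eval t := by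
  obtain ⟨hpoly, hzero, hsucc⟩ := hΛ
  choose P hP using hpoly
  refine ⟨P, ⟨?_, fun l => ?_, fun l => ?_, fun l => ?_⟩, hP⟩
  · exact Polynomial.funext fun t => by rw [← hP, hzero, eval_X]
  · refine Polynomial.funext fun t => ?_
    have hderiv := (hsucc l).1 t
    rw [_root_.funext (hP (l + 1)), iteratedDeriv_polynomial_eval, hP] at hderiv
    exact hderiv
  · rw [← hP, (hsucc l).2.1]
  · rw [← hP, (hsucc l).2.2]

namespace IsLidstoneSequence

lemma one_eq {K : Type*} [Field K] [CharZero K] {P : ℕ → K[X]} (hP : IsLidstoneSequence P) :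
    P 1 = C (1 / 6) * (X ^ 3 - X) := by
  refine eq_of_derivative_derivative_eq zero_ne_one ?_ ?_ ?_
  · rw [hP.derivative_derivative 0, hP.zero]
    refine Polynomial.funext fun t => ?_
    simp only [eval_X, derivative_sub, derivative_X_pow_succ, derivative_X,
      derivative_one, map_add, map_one, Nat.cast_ofNat, Nat.cast_one, pow_one,
      derivative_mul, derivative_C, zero_mul, zero_add, add_zero, sub_zero, eval_mul, eval_C,
      eval_add, Polynomial.eval_one]
    ring
  · simp [hP.eval_zero 0]
  · simp [hP.eval_one 0]

variable {P : ℕ → ℝ[X]}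

lemma abs_eval_succ_le_sin (hP : IsLidstoneSequence P) (l : ℕ) {s : ℝ} (hs : s ∈ Icc (0 : ℝ) 1) :
    |(P (l + 1)).eval s| ≤
      Real.pi / 3 / Real.pi ^ (2 * (l + 1)) * Real.sin (Real.pi * s) := by
  induction l generalizing s with
  | zero =>
    have hprod : 0 ≤ s * (1 - s) := mul_nonneg hs.1 (sub_nonneg.2 hs.2)
    have heval : (P 1).eval s = -(s * (1 - s) * ((1 + s) / 6)) := by
      simp only [hP.one_eq, eval_mul, eval_C, eval_sub, eval_pow, eval_X]
      ring
    rw [zero_add, heval, abs_neg, abs_of_nonneg (mul_nonneg hprod (by linarith [hs.1]))]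
    calc s * (1 - s) * ((1 + s) / 6)
        ≤ s * (1 - s) * (1 / 3) := mul_le_mul_of_nonneg_left (by linarith [hs.2]) hprod
      _ = Real.pi / 3 / Real.pi ^ (2 * 1) * (Real.pi * (s * (1 - s))) := by field_simp
      _ ≤ _ := by gcongr; exact pi_mul_mul_one_sub_le_sin hs
  | succ l ih =>
    have hstep := abs_eval_le_sin_of_abs_derivative_derivative_le (hP.eval_zero (l + 1))
      (hP.eval_one (l + 1)) (fun r hr => by rw [hP.derivative_derivative]; exact ih hr) hs
    rwa [div_div _ (Real.pi ^ _), ← pow_add] at hstep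

lemma abs_eval_le (hP : IsLidstoneSequence P) (l : ℕ) {s : ℝ} (hs : s ∈ Icc (0 : ℝ) 1) :
    |(P l).eval s| ≤ Real.pi / 3 / Real.pi ^ (2 * l) := by
  cases l with
  | zero =>
    rw [hP.zero, eval_X, abs_of_nonneg hs.1, mul_zero, pow_zero, div_one]
    linarith [hs.2, Real.pi_gt_three]
  | succ l =>
    exact (hP.abs_eval_succ_le_sin l hs).trans
      (mul_le_of_le_one_right (by positivity) (Real.sin_le_one _))

end IsLidstoneSequence

/-- The affine map carrying `[a, b]` onto `[c, d]`, so that `L n` is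
`affineRescale (x 0) (x N) (x (n - 1)) (x n)`. -/
def affineRescale {K : Type*} [Field K] (a b c d t : K) : K :=
  (d - c) / (b - a) * t + (b * c - a * d) / (b - a)

section AffineRescale

variable {K : Type*} [Field K] {a b c d : K}

lemma affineRescale_sub_left_div (hab : b - a ≠ 0) (hcd : d - c ≠ 0) (t : K) :
    (affineRescale a b c d t - c) / (d - c) = (t - a) / (b - a) := by
  unfold affineRescale
  field_simp
  ring

lemma right_sub_affineRescale_div (hab : b - a ≠ 0) (hcd : d - c ≠ 0) (t : K) :
    (d - affineRescale a b c d t) / (d - c) = (b - t) / (b - a) := by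
  unfold affineRescale
  field_simp
  ring

lemma affineRescale_affineRescale (hab : b - a ≠ 0) (hcd : d - c ≠ 0) (t : K) :
    affineRescale a b c d (affineRescale c d a b t) = t := by
  unfold affineRescale
  field_simp
  ring

lemma affineRescale_mem_Icc [LinearOrder K] [IsStrictOrderedRing K] (hab : a < b) (hcd : c < d)
    {t : K} (ht : t ∈ Icc a b) : affineRescale a b c d t ∈ Icc c d := by
  have hba := sub_pos.2 hab
  have hdc := sub_pos.2 hcd
  constructor
  · have h := div_nonneg (sub_nonneg.2 ht.1) hba.le
    rw [← affineRescale_sub_left_div hba.ne' hdc.ne', le_div_iff₀ hdc, zero_mul] at h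
    exact sub_nonneg.1 h
  · have h := div_nonneg (sub_nonneg.2 ht.2) hba.le
    rw [← right_sub_affineRescale_div hba.ne' hdc.ne', le_div_iff₀ hdc, zero_mul] at h
    exact sub_nonneg.1 h

end AffineRescale

/-- The Lidstone interpolant on `[a, b]`: for `a ≠ b` and a Lidstone sequence `P`, the polynomial
of degree at most `2 * p + 1` whose derivative of order `2 * l` is `u l` at `a` and `v l` at `b`
for all `l ≤ p`. -/
noncomputable def lidstoneInterpolant {K : Type*} [Field K] (P : ℕ → K[X]) (p : ℕ) (a b : K)
    (u v : ℕ → K) : K[X] :=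
  ∑ l ∈ Finset.range (p + 1), C ((b - a) ^ (2 * l)) *
    (C (u l) * (P l).comp (C (b - a)⁻¹ * (C b - X)) +
      C (v l) * (P l).comp (C (b - a)⁻¹ * (X - C a)))

section Interpolant

variable {K : Type*} [Field K] {P : ℕ → K[X]} {p : ℕ} {a b c d : K} {u v u₀ v₀ : ℕ → K}

lemma eval_lidstoneInterpolant (t : K) :
    (lidstoneInterpolant P p a b u v).eval t = ∑ l ∈ Finset.range (p + 1),
      (u l * (P l).eval ((b - t) / (b - a)) + v l * (P l).eval ((t - a) / (b - a))) *
        (b - a) ^ (2 * l) := by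
  simp only [lidstoneInterpolant, eval_finsetSum, eval_mul, eval_add, eval_sub, eval_comp, eval_C,
    eval_X, inv_mul_eq_div, mul_comm ((b - a) ^ _)]

lemma lidstoneInterpolant_congr {u' v' : ℕ → K} (hu : ∀ l ≤ p, u l = u' l)
    (hv : ∀ l ≤ p, v l = v' l) :
    lidstoneInterpolant P p a b u v = lidstoneInterpolant P p a b u' v' := by
  refine Finset.sum_congr rfl fun l hl => ?_
  have hlp : l ≤ p := Finset.mem_range_succ_iff.1 hl
  rw [hu l hlp, hv l hlp]

lemma eval_lidstoneInterpolant_sub_mul (k t : K) :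
    (lidstoneInterpolant P p a b (fun l => u l - k * u₀ l) (fun l => v l - k * v₀ l)).eval t =
      (lidstoneInterpolant P p a b u v).eval t -
        k * (lidstoneInterpolant P p a b u₀ v₀).eval t := by
  simp only [eval_lidstoneInterpolant, Finset.mul_sum, ← Finset.sum_sub_distrib]
  exact Finset.sum_congr rfl fun l _ => by ring

lemma eval_lidstoneInterpolant_affineRescale (hab : b - a ≠ 0) (hcd : d - c ≠ 0) (t : K) :
    (lidstoneInterpolant P p c d u v).eval (affineRescale a b c d t) =
      (lidstoneInterpolant P p a b (fun l => ((d - c) / (b - a)) ^ (2 * l) * u l)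
        (fun l => ((d - c) / (b - a)) ^ (2 * l) * v l)).eval t := by
  simp only [eval_lidstoneInterpolant, affineRescale_sub_left_div hab hcd,
    right_sub_affineRescale_div hab hcd]
  refine Finset.sum_congr rfl fun l _ => ?_
  rw [div_pow]
  field_simp

namespace IsLidstoneSequence

lemma eval_left_lidstoneInterpolant (hP : IsLidstoneSequence P) (hab : b - a ≠ 0) :
    (lidstoneInterpolant P p a b u v).eval a = u 0 := by
  simp [eval_lidstoneInterpolant, Finset.sum_range_succ', hP.zero, hP.eval_zero, hP.eval_one, hab]

lemma eval_right_lidstoneInterpolant (hP : IsLidstoneSequence P) (hab : b - a ≠ 0) :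
    (lidstoneInterpolant P p a b u v).eval b = v 0 := by
  simp [eval_lidstoneInterpolant, Finset.sum_range_succ', hP.zero, hP.eval_zero, hP.eval_one, hab]

lemma derivative_derivative_lidstoneInterpolant_zero (hP : IsLidstoneSequence P) :
    derivative (derivative (lidstoneInterpolant P 0 a b u v)) = 0 := by
  simp [lidstoneInterpolant, hP.zero]

lemma derivative_derivative_lidstoneInterpolant_succ (hP : IsLidstoneSequence P)
    (hab : b - a ≠ 0) :
    derivative (derivative (lidstoneInterpolant P (p + 1) a b u v)) =
      lidstoneInterpolant P p a b (fun l => u (l + 1)) (fun l => v (l + 1)) := by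
  have hleft : derivative (C (b - a)⁻¹ * (C b - X)) = C (-(b - a)⁻¹) := by simp
  have hright : derivative (C (b - a)⁻¹ * (X - C a)) = C (b - a)⁻¹ := by simp
  have hscale (l : ℕ) :
      (C ((b - a) ^ (2 * l)) : K[X]) = C ((b - a) ^ (2 * (l + 1))) * C ((b - a)⁻¹ ^ 2) := by
    rw [← C_mul, mul_add, pow_add, mul_one, inv_pow, mul_inv_cancel_right₀ (pow_ne_zero 2 hab)]
  simp only [lidstoneInterpolant, Finset.sum_range_succ' _ (p + 1), derivative_add, derivative_sum,
    derivative_C_mul, derivative_derivative_comp_of_derivative_eq_C hleft,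
    derivative_derivative_comp_of_derivative_eq_C hright, hP.derivative_derivative, hP.zero,
    derivative_X, derivative_one, zero_comp, mul_zero, add_zero, neg_sq]
  refine Finset.sum_congr rfl fun l _ => ?_
  rw [hscale l]
  ring

theorem eq_lidstoneInterpolant [CharZero K] (hP : IsLidstoneSequence P) (hab : b - a ≠ 0)
    {R : K[X]} (hR : derivative^[2 * p + 2] R = 0) :
    R = lidstoneInterpolant P p a b (fun l => (derivative^[2 * l] R).eval a)
      (fun l => (derivative^[2 * l] R).eval b) := by
  induction p generalizing R with
  | zero =>
    refine eq_of_derivative_derivative_eq (sub_ne_zero.1 hab).symm ?_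
      (by rw [hP.eval_left_lidstoneInterpolant hab]; rfl)
      (by rw [hP.eval_right_lidstoneInterpolant hab]; rfl)
    rw [hP.derivative_derivative_lidstoneInterpolant_zero]
    exact hR
  | succ p ih =>
    refine eq_of_derivative_derivative_eq (sub_ne_zero.1 hab).symm ?_
      (by rw [hP.eval_left_lidstoneInterpolant hab]; rfl)
      (by rw [hP.eval_right_lidstoneInterpolant hab]; rfl)
    rw [hP.derivative_derivative_lidstoneInterpolant_succ hab]
    exact ih hR

end IsLidstoneSequence

end Interpolant

namespace IsLidstoneSequence

variable {P : ℕ → ℝ[X]} {p : ℕ} {a b c d : ℝ} {u v u₀ v₀ : ℕ → ℝ}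

theorem abs_eval_lidstoneInterpolant_le (hP : IsLidstoneSequence P) (hab : a < b) {ρ : ℝ}
    (hu : ∀ l ≤ p, |u l| ≤ ρ) (hv : ∀ l ≤ p, |v l| ≤ ρ) {t : ℝ} (ht : t ∈ Icc a b) :
    |(lidstoneInterpolant P p a b u v).eval t| ≤
      2 * ρ * Real.pi / 3 * ∑ l ∈ Finset.range (p + 1), ((b - a) / Real.pi) ^ (2 * l) := by
  have hba := sub_pos.2 hab
  have hleft : (b - t) / (b - a) ∈ Icc (0 : ℝ) 1 :=
    ⟨div_nonneg (sub_nonneg.2 ht.2) hba.le, (div_le_one hba).2 (by linarith [ht.1])⟩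
  have hright : (t - a) / (b - a) ∈ Icc (0 : ℝ) 1 :=
    ⟨div_nonneg (sub_nonneg.2 ht.1) hba.le, (div_le_one hba).2 (by linarith [ht.2])⟩
  have hρ : 0 ≤ ρ := (abs_nonneg _).trans (hu 0 p.zero_le)
  rw [eval_lidstoneInterpolant, Finset.mul_sum]
  refine (Finset.abs_sum_le_sum_abs _ _).trans (Finset.sum_le_sum fun l hl => ?_)
  have hlp : l ≤ p := Finset.mem_range_succ_iff.1 hl
  rw [abs_mul, abs_of_nonneg (pow_nonneg hba.le _)]
  calc |u l * (P l).eval ((b - t) / (b - a)) + v l * (P l).eval ((t - a) / (b - a))| *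
        (b - a) ^ (2 * l)
      ≤ (|u l| * |(P l).eval ((b - t) / (b - a))| + |v l| * |(P l).eval ((t - a) / (b - a))|) *
          (b - a) ^ (2 * l) := by
        gcongr
        rw [← abs_mul, ← abs_mul]
        exact abs_add_le _ _
    _ ≤ (ρ * (Real.pi / 3 / Real.pi ^ (2 * l)) + ρ * (Real.pi / 3 / Real.pi ^ (2 * l))) *
          (b - a) ^ (2 * l) := by
        gcongr
        exacts [hu l hlp, hP.abs_eval_le l hleft, hv l hlp, hP.abs_eval_le l hright]
    _ = 2 * ρ * Real.pi / 3 * ((b - a) / Real.pi) ^ (2 * l) := by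
        rw [div_pow]
        ring

theorem eq_lidstoneInterpolant_affineRescale_sub (hP : IsLidstoneSequence P) (hab : b - a ≠ 0)
    (hcd : d - c ≠ 0) {k : ℝ} {q : ℝ → ℝ}
    (hpoly : ∃ R : ℝ[X], R.natDegree ≤ 2 * p + 1 ∧ ∀ t, q t = R.eval t)
    (hdata : ∀ l ≤ p,
      iteratedDeriv (2 * l) q a = ((d - c) / (b - a)) ^ (2 * l) * u l - k * u₀ l ∧
      iteratedDeriv (2 * l) q b = ((d - c) / (b - a)) ^ (2 * l) * v l - k * v₀ l) (s : ℝ) :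
    q s = (lidstoneInterpolant P p c d u v).eval (affineRescale a b c d s) -
      k * (lidstoneInterpolant P p a b u₀ v₀).eval s := by
  obtain ⟨R, hdegree, hqR⟩ := hpoly
  obtain rfl : q = fun t => R.eval t := funext hqR
  simp only [iteratedDeriv_polynomial_eval] at hdata
  rw [eval_lidstoneInterpolant_affineRescale hab hcd, ← eval_lidstoneInterpolant_sub_mul,
    ← lidstoneInterpolant_congr (fun l hl => (hdata l hl).1) (fun l hl => (hdata l hl).2),
    ← hP.eq_lidstoneInterpolant hab (iterate_derivative_eq_zero (by lia))]

theorem exists_sub_eq_mul_of_functional_eq (hP : IsLidstoneSequence P) (hab : a < b) (hcd : c < d)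
    {k : ℝ} {q : ℝ → ℝ} (hpoly : ∃ R : ℝ[X], R.natDegree ≤ 2 * p + 1 ∧ ∀ t, q t = R.eval t)
    (hdata : ∀ l ≤ p,
      iteratedDeriv (2 * l) q a = ((d - c) / (b - a)) ^ (2 * l) * u l - k * u₀ l ∧
      iteratedDeriv (2 * l) q b = ((d - c) / (b - a)) ^ (2 * l) * v l - k * v₀ l)
    {ℓ φ : ℝ → ℝ} (hℓ : ∀ s ∈ Icc a b, ℓ (affineRescale a b c d s) = k * ℓ s + q s)
    (hφ : ∀ t ∈ Icc c d, φ t = (lidstoneInterpolant P p c d u v).eval t)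
    {t : ℝ} (ht : t ∈ Icc c d) :
    ∃ s ∈ Icc a b,
      ℓ t - φ t = k * ((ℓ s - φ s) + (φ s - (lidstoneInterpolant P p a b u₀ v₀).eval s)) := by
  have hba := (sub_pos.2 hab).ne'
  have hdc := (sub_pos.2 hcd).ne'
  have hs := affineRescale_mem_Icc hcd hab ht
  refine ⟨affineRescale c d a b t, hs, ?_⟩
  have hℓt := hℓ _ hs
  rw [hP.eq_lidstoneInterpolant_affineRescale_sub hba hdc hpoly hdata,
    affineRescale_affineRescale hba hdc, ← hφ t ht] at hℓt
  rw [hℓt]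
  ring

end IsLidstoneSequence

lemma exists_mem_Icc_pred_of_mem_Icc {α : Type*} [LinearOrder α] {x : ℕ → α} {N : ℕ} (hN : 1 ≤ N)
    {t : α} (ht : t ∈ Icc (x 0) (x N)) : ∃ n, 1 ≤ n ∧ n ≤ N ∧ t ∈ Icc (x (n - 1)) (x n) := by
  induction N, hN using Nat.le_induction with
  | base => exact ⟨1, le_rfl, le_rfl, ht⟩
  | succ N _ ih =>
    rcases le_total t (x N) with hle | hge
    · obtain ⟨n, hn, hnN, htn⟩ := ih ⟨ht.1, hle⟩
      exact ⟨n, hn, hnN.trans N.le_succ, htn⟩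
    · exact ⟨N + 1, N.succ_pos, le_rfl, hge, ht.2⟩

lemma sSup_image_le_of_forall_exists_le {X : Type*} {S : Set X} (hS : S.Nonempty) {e : X → ℝ}
    (hbdd : BddAbove (e '' S)) {A K : ℝ} (hA0 : 0 ≤ A) (hA1 : A < 1)
    (h : ∀ t ∈ S, ∃ s ∈ S, e t ≤ A * (e s + K)) : sSup (e '' S) ≤ A / (1 - A) * K := by
  have hself : sSup (e '' S) ≤ A * (sSup (e '' S) + K) := by
    refine csSup_le (hS.image e) (forall_mem_image.2 fun t ht => ?_)
    obtain ⟨s, hs, hle⟩ := h t ht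
    refine hle.trans ?_
    gcongr
    exact le_csSup hbdd (mem_image_of_mem e hs)
  rw [div_mul_eq_mul_div, le_div_iff₀ (sub_pos.2 hA1)]
  linarith

lemma bddAbove_image_abs_sub {X : Type*} {S : Set X} {f g : X → ℝ}
    (hf : BddAbove ((fun t => |f t|) '' S)) (hg : BddAbove ((fun t => |g t|) '' S)) :
    BddAbove ((fun t => |f t - g t|) '' S) := by
  obtain ⟨F, hF⟩ := hf
  obtain ⟨G, hG⟩ := hg
  exact ⟨F + G, forall_mem_image.2 fun t ht => (abs_sub _ _).trans
    (add_le_add (hF (mem_image_of_mem _ ht)) (hG (mem_image_of_mem _ ht)))⟩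

theorem sSup_abs_sub_le_of_forall_exists_sub_eq_mul {X : Type*} {S : Set X} (hS : S.Nonempty)
    {ℓ φ B : X → ℝ} (hℓ : BddAbove ((fun t => |ℓ t|) '' S))
    (hφ : BddAbove ((fun t => |φ t|) '' S)) {M : ℝ} (hB : ∀ s ∈ S, |B s| ≤ M) {A : ℝ} (hA : A < 1)
    (h : ∀ t ∈ S, ∃ k, |k| ≤ A ∧ ∃ s ∈ S, ℓ t - φ t = k * ((ℓ s - φ s) + (φ s - B s))) :
    sSup ((fun t => |ℓ t - φ t|) '' S) ≤ A / (1 - A) * (sSup ((fun t => |φ t|) '' S) + M) := by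
  have hA0 : 0 ≤ A := by
    obtain ⟨t, ht⟩ := hS
    obtain ⟨k, hk, -⟩ := h t ht
    exact (abs_nonneg k).trans hk
  refine sSup_image_le_of_forall_exists_le hS (bddAbove_image_abs_sub hℓ hφ) hA0 hA fun t ht => ?_
  obtain ⟨k, hk, s, hs, hdiff⟩ := h t ht
  refine ⟨s, hs, ?_⟩
  calc |ℓ t - φ t| = |k| * |(ℓ s - φ s) + (φ s - B s)| := by rw [hdiff, abs_mul]
    _ ≤ A * (|ℓ s - φ s| + (|φ s| + |B s|)) := by
        gcongr
        exact (abs_add_le _ _).trans (add_le_add_right (abs_sub _ _) _)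
    _ ≤ A * (|ℓ s - φ s| + (sSup ((fun t => |φ t|) '' S) + M)) := by
        gcongr
        exacts [le_csSup hφ (mem_image_of_mem _ hs), hB s hs]

lemma sub_div_sub_mem_Icc_of_monotoneOn {K : Type*} [Field K] [LinearOrder K]
    [IsStrictOrderedRing K] {x : ℕ → K} {N n : ℕ} (hx : MonotoneOn x (Iic N)) (hn : n ≤ N) :
    (x n - x (n - 1)) / (x N - x 0) ∈ Icc (0 : K) 1 := by
  have hpred : n - 1 ∈ Iic N := (n.sub_le 1).trans hn
  have hstep : x (n - 1) ≤ x n := hx hpred hn (n.sub_le 1)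
  have hfirst : x 0 ≤ x (n - 1) := hx N.zero_le hpred (Nat.zero_le _)
  have hlast : x n ≤ x N := hx hn self_mem_Iic hn
  exact ⟨div_nonneg (by linarith) (by linarith), div_le_one_of_le₀ (by linarith) (by linarith)⟩

theorem lidstone_FIF_vs_classical_general (Λ : ℕ → ℝ → ℝ) (hΛ : LidstoneProp Λ)
    (p N : ℕ) (hN : 1 ≤ N)
    (x : ℕ → ℝ) (hx : ∀ n < N, x n < x (n + 1))
    (y : ℕ → ℕ → ℝ)
    (L : ℕ → ℝ → ℝ)
    (hL : ∀ n t, L n t = ((x n - x (n - 1)) / (x N - x 0)) * t +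
      (x N * x (n - 1) - x 0 * x n) / (x N - x 0))
    (α : ℕ → ℝ)
    (hα : ∀ n, 1 ≤ n → n ≤ N → |α n| < 1)
    (q : ℕ → ℝ → ℝ)
    (hq : ∀ n, 1 ≤ n → n ≤ N →
      (∃ P : Polynomial ℝ, P.natDegree ≤ 2 * p + 1 ∧ ∀ t, q n t = P.eval t) ∧
      ∀ l ≤ p,
        iteratedDeriv (2 * l) (q n) (x 0) =
          ((x n - x (n - 1)) / (x N - x 0)) ^ (2 * l) * y (n - 1) l - α n * y 0 l ∧
        iteratedDeriv (2 * l) (q n) (x N) =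
          ((x n - x (n - 1)) / (x N - x 0)) ^ (2 * l) * y n l - α n * y N l)
    (ℓ : ℝ → ℝ)
    (hℓbdd : BddAbove ((fun t => |ℓ t|) '' Set.Icc (x 0) (x N)))
    (hℓ : ∀ n, 1 ≤ n → n ≤ N → ∀ t ∈ Set.Icc (x 0) (x N),
      ℓ (L n t) = α n * ℓ t + q n t)
    (φ : ℝ → ℝ)
    (hφcont : ContinuousOn φ (Set.Icc (x 0) (x N)))
    (hφ : ∀ n, 1 ≤ n → n ≤ N → ∀ t ∈ Set.Icc (x (n - 1)) (x n),
      φ t = ∑ l ∈ Finset.range (p + 1),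
        (y (n - 1) l * Λ l ((x n - t) / (x n - x (n - 1))) +
          y n l * Λ l ((t - x (n - 1)) / (x n - x (n - 1)))) *
          (x n - x (n - 1)) ^ (2 * l))
    (ρ Aα : ℝ)
    (hρ : ρ = (Finset.range (p + 1)).sup'
      (Finset.nonempty_range_iff.mpr p.succ_ne_zero)
      (fun k => max |y 0 k| |y N k|))
    (hAα : Aα = (Finset.Icc 1 N).sup' (Finset.nonempty_Icc.mpr hN)
      (fun n => |α n|)) :
    sSup ((fun t => |ℓ t - φ t|) '' Set.Icc (x 0) (x N)) ≤
      (Aα / (1 - Aα)) *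
        (sSup ((fun t => |φ t|) '' Set.Icc (x 0) (x N)) +
          (2 * ρ * Real.pi / 3) *
            ∑ l ∈ Finset.range (p + 1), ((x N - x 0) / Real.pi) ^ (2 * l)) := by
  obtain ⟨P, hP, hΛP⟩ := hΛ.exists_isLidstoneSequence
  have hmono := strictMonoOn_Iic_of_lt_succ hx
  have hab : x 0 < x N := hmono N.zero_le self_mem_Iic hN
  have hA1 : Aα < 1 := by
    rw [hAα, Finset.sup'_lt_iff]
    exact fun n hn => hα n (Finset.mem_Icc.1 hn).1 (Finset.mem_Icc.1 hn).2
  have hy_le (l : ℕ) (hl : l ≤ p) : max |y 0 l| |y N l| ≤ ρ :=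
    hρ ▸ Finset.le_sup' (fun k => max |y 0 k| |y N k|) (Finset.mem_range_succ_iff.2 hl)
  refine sSup_abs_sub_le_of_forall_exists_sub_eq_mul (nonempty_Icc.2 hab.le) hℓbdd
    (isCompact_Icc.bddAbove_image hφcont.abs)
    (fun s hs => hP.abs_eval_lidstoneInterpolant_le hab
      (fun l hl => (le_max_left _ _).trans (hy_le l hl))
      (fun l hl => (le_max_right _ _).trans (hy_le l hl)) hs) hA1 fun t ht => ?_
  obtain ⟨n, hn, hnN, htn⟩ := exists_mem_Icc_pred_of_mem_Icc hN ht
  have hα_le : |α n| ≤ Aα :=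
    hAα ▸ Finset.le_sup' (fun n => |α n|) (Finset.mem_Icc.2 ⟨hn, hnN⟩)
  have hcd : x (n - 1) < x n := hmono ((n.sub_le 1).trans hnN) hnN (Nat.sub_one_lt_of_lt hn)
  have hℓn : ∀ s ∈ Icc (x 0) (x N),
      ℓ (affineRescale (x 0) (x N) (x (n - 1)) (x n) s) = α n * ℓ s + q n s :=
    fun s hs => by rw [← hℓ n hn hnN s hs, hL, affineRescale]
  have hφn : ∀ r ∈ Icc (x (n - 1)) (x n),
      φ r = (lidstoneInterpolant P p (x (n - 1)) (x n) (y (n - 1)) (y n)).eval r :=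
    fun r hr => by simp only [hφ n hn hnN r hr, hΛP, eval_lidstoneInterpolant]
  exact ⟨α n, hα_le, hP.exists_sub_eq_mul_of_functional_eq hab hcd (hq n hn hnN).1
    (hq n hn hnN).2 hℓn hφn htn⟩

/-- Error between the Lidstone FIF `ℓ_α` and the classical Lidstone interpolation
function `φ`: `‖ℓ_α - φ‖_∞ ≤ (|α|_∞ / (1 - |α|_∞)) (‖φ‖_∞ + M_{0,2p})`, where
`M_{0,2p} = (2ρπ/3) ∑_{l=0}^{p} ((x N - x 0)/π)^(2l)` and
`ρ = max_{0 ≤ k ≤ p} max {|y 0 k|, |y N k|}`. -/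
theorem lidstone_FIF_vs_classical (Λ : ℕ → ℝ → ℝ) (hΛ : LidstoneProp Λ)
    (p N : ℕ) (hp : 1 ≤ p) (hN : 1 ≤ N)
    (x : ℕ → ℝ) (hx : ∀ n < N, x n < x (n + 1))
    (y : ℕ → ℕ → ℝ)
    (L : ℕ → ℝ → ℝ)
    (hL : ∀ n t, L n t = ((x n - x (n - 1)) / (x N - x 0)) * t +
      (x N * x (n - 1) - x 0 * x n) / (x N - x 0))
    (α : ℕ → ℝ)
    (hα : ∀ n, 1 ≤ n → n ≤ N →
      |α n| < ((x n - x (n - 1)) / (x N - x 0)) ^ (2 * p))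
    (q : ℕ → ℝ → ℝ)
    (hq : ∀ n, 1 ≤ n → n ≤ N →
      (∃ P : Polynomial ℝ, P.natDegree ≤ 2 * p + 1 ∧ ∀ t, q n t = P.eval t) ∧
      ∀ l ≤ p,
        iteratedDeriv (2 * l) (q n) (x 0) =
          ((x n - x (n - 1)) / (x N - x 0)) ^ (2 * l) * y (n - 1) l - α n * y 0 l ∧
        iteratedDeriv (2 * l) (q n) (x N) =
          ((x n - x (n - 1)) / (x N - x 0)) ^ (2 * l) * y n l - α n * y N l)
    (ℓ : ℝ → ℝ)
    (hℓcont : ContinuousOn ℓ (Set.Icc (x 0) (x N)))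
    (hℓ : ∀ n, 1 ≤ n → n ≤ N → ∀ t ∈ Set.Icc (x 0) (x N),
      ℓ (L n t) = α n * ℓ t + q n t)
    (φ : ℝ → ℝ)
    (hφcont : ContinuousOn φ (Set.Icc (x 0) (x N)))
    (hφ : ∀ n, 1 ≤ n → n ≤ N → ∀ t ∈ Set.Icc (x (n - 1)) (x n),
      φ t = ∑ l ∈ Finset.range (p + 1),
        (y (n - 1) l * Λ l ((x n - t) / (x n - x (n - 1))) +
          y n l * Λ l ((t - x (n - 1)) / (x n - x (n - 1)))) *
          (x n - x (n - 1)) ^ (2 * l))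
    (ρ Aα : ℝ)
    (hρ : ρ = (Finset.range (p + 1)).sup'
      (Finset.nonempty_range_iff.mpr p.succ_ne_zero)
      (fun k => max |y 0 k| |y N k|))
    (hAα : Aα = (Finset.Icc 1 N).sup' (Finset.nonempty_Icc.mpr hN)
      (fun n => |α n|)) :
    sSup ((fun t => |ℓ t - φ t|) '' Set.Icc (x 0) (x N)) ≤
      (Aα / (1 - Aα)) *
        (sSup ((fun t => |φ t|) '' Set.Icc (x 0) (x N)) +
          (2 * ρ * Real.pi / 3) *
            ∑ l ∈ Finset.range (p + 1), ((x N - x 0) / Real.pi) ^ (2 * l)) := by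
  have hmono := (strictMonoOn_Iic_of_lt_succ hx).monotoneOn
  have hratio (n : ℕ) (hnN : n ≤ N) := sub_div_sub_mem_Icc_of_monotoneOn hmono hnN
  exact lidstone_FIF_vs_classical_general Λ hΛ p N hN x hx y L hL α
    (fun n hn hnN => (hα n hn hnN).trans_le (pow_le_one₀ (hratio n hnN).1 (hratio n hnN).2))
    q hq ℓ (isCompact_Icc.bddAbove_image hℓcont.abs) hℓ φ hφcont hφ ρ Aα hρ hAα
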